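/- arXiv:1604.02234 — 11 statements merged into one kernel-verified Lean document; each statement's English description precedes it below -/
import Mathlib

section
/- Let J be a finite index set, s₀ ≥ 0 and s_j ≥ 0 (j ∈ J) be reals, and I_out > 0, I_in > 0 be reals. Set μ = min{1, 1/I_out} and μ' = min{1, 1/I_in}. Then log₂(1 + (μ·s₀ + Σ_{j∈J} s_j)/(1 + μ'·I_in)) ≥ log₂(1 + Σ_{j∈J} s_j + s₀/(1 + I_out)) − 1. -/
/-!
The interference residue `μ' * Iin` is at most `1`, so dividing by `1 + μ' * Iin` costs at most
a factor `2`; and `μ ≥ 1 / (1 + Iout)`, so the private signal power dominates `s0 / (1 + Iout)`.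
Hence the argument of the inner logarithm is at least half that of the outer one, which is a loss
of at most one bit.
-/

open Finset

/-- one-bit gap between the inner set function `A` and the outer
set function `Ā` of the Gaussian MAC-IC-MAC, with Etkin–Tse–Wang private-power
fractions `μ = min{1, 1/I_out}` and `μ' = min{1, 1/I_in}`. -/
theorem one_bit_gap_A
    (J : Type*) [Fintype J] (s : J → ℝ) (hs : ∀ j, 0 ≤ s j)
    (s0 : ℝ) (hs0 : 0 ≤ s0)
    (Iout Iin : ℝ) (hIout : 0 < Iout) (hIin : 0 < Iin) :
    Real.logb 2 (1 + (min 1 (1 / Iout) * s0 + ∑ j, s j) /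
        (1 + min 1 (1 / Iin) * Iin))
      ≥ Real.logb 2 (1 + (∑ j, s j) + s0 / (1 + Iout)) - 1 := by
  have hS : 0 ≤ ∑ j, s j := Finset.sum_nonneg fun j _ => hs j
  -- At most unit interference power survives, so the inner-bound denominator is at most 2.
  have hden : 1 + min 1 (1 / Iin) * Iin ≤ 2 := by
    have h : min 1 (1 / Iin) * Iin ≤ 1 / Iin * Iin :=
      mul_le_mul_of_nonneg_right (min_le_right _ _) hIin.le
    rw [one_div_mul_cancel hIin.ne'] at h
    linarith
  have hden_pos : 0 < 1 + min 1 (1 / Iin) * Iin := by positivity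
  have hμ : 1 / (1 + Iout) ≤ min 1 (1 / Iout) := by
    refine le_min ?_ ?_
    · rw [div_le_one (by linarith)]
      linarith
    · exact one_div_le_one_div_of_le hIout (by linarith)
  have hprivate : s0 / (1 + Iout) ≤ min 1 (1 / Iout) * s0 := by
    have h := mul_le_mul_of_nonneg_right hμ hs0
    rwa [one_div_mul_eq_div] at h
  have hnum : 0 ≤ min 1 (1 / Iout) * s0 + ∑ j, s j := by positivity
  have hhalf : (min 1 (1 / Iout) * s0 + ∑ j, s j) / 2 ≤
      (min 1 (1 / Iout) * s0 + ∑ j, s j) / (1 + min 1 (1 / Iin) * Iin) :=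
    div_le_div_of_nonneg_left hnum hden_pos hden
  have hpos : 0 < 1 + (∑ j, s j) + s0 / (1 + Iout) := by positivity
  -- Subtracting one bit halves the argument of the logarithm.
  have hbit : Real.logb 2 (1 + (∑ j, s j) + s0 / (1 + Iout)) - 1 =
      Real.logb 2 ((1 + (∑ j, s j) + s0 / (1 + Iout)) / 2) := by
    rw [Real.logb_div hpos.ne' two_ne_zero, Real.logb_self_eq_one one_lt_two]
  rw [ge_iff_le, hbit]
  exact Real.logb_le_logb_of_le one_lt_two (by positivity) (by linarith)
end

section
/- Let J be a finite index set, s_j ≥ 0 (j ∈ J) be reals, and I_in > 0 be a real. Set μ' = min{1, 1/I_in}. Then log₂(1 + (Σ_{j∈J} s_j)/(1 + μ'·I_in)) ≥ log₂(1 + Σ_{j∈J} s_j) − 1. -/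
open Finset

/-- one-bit gap between the inner set function `B` and the outer
set function `B̄` of the Gaussian MAC-IC-MAC, with Etkin–Tse–Wang private-power
fraction `μ' = min{1, 1/I_in}`. -/
theorem one_bit_gap_B
    (J : Type*) [Fintype J] (s : J → ℝ) (hs : ∀ j, 0 ≤ s j)
    (Iin : ℝ) (hIin : 0 < Iin) :
    Real.logb 2 (1 + (∑ j, s j) / (1 + min 1 (1 / Iin) * Iin))
      ≥ Real.logb 2 (1 + ∑ j, s j) - 1 := by
  have hS : 0 ≤ ∑ j, s j := Finset.sum_nonneg fun j _ => hs j
  -- The private-power fraction keeps the received private interference at most at noise level.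
  have hμ : min 1 (1 / Iin) * Iin ≤ 1 :=
    calc min 1 (1 / Iin) * Iin ≤ 1 / Iin * Iin :=
          mul_le_mul_of_nonneg_right (min_le_right _ _) hIin.le
      _ = 1 := one_div_mul_cancel hIin.ne'
  have hμ0 : 0 ≤ min 1 (1 / Iin) * Iin := by positivity
  -- The noise level at most doubles, so the SNR is at most halved.
  have hhalf : (∑ j, s j) / 2 ≤ (∑ j, s j) / (1 + min 1 (1 / Iin) * Iin) :=
    div_le_div_of_nonneg_left hS (by linarith) (by linarith)
  have hlog : Real.logb 2 (1 + ∑ j, s j) - 1 = Real.logb 2 ((1 + ∑ j, s j) / 2) := by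
    rw [Real.logb_div (by positivity) two_ne_zero, Real.logb_self_eq_one one_lt_two]
  rw [ge_iff_le, hlog]
  exact Real.logb_le_logb_of_le one_lt_two (by positivity) (by linarith)
end

section
/- Let J be a finite index set, s₀ ≥ 0 and s_j ≥ 0 (j ∈ J) be reals, and I_out > 0, I_in > 0 be reals. Set μ = min{1, 1/I_out} and μ' = min{1, 1/I_in}. Then log₂(1 + (μ·s₀ + Σ_{j∈J} s_j + (1 − μ')·I_in)/(1 + μ'·I_in)) ≥ log₂(1 + Σ_{j∈J} s_j + s₀/(1 + I_out) + I_in) − 1. -/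
/-!
The argument of the left logarithm equals `(1 + S + μ s₀ + I_in) / (1 + μ' I_in)` with `S = ∑ s_j`.
Since `μ' I_in ≤ 1` the denominator is at most `2`, and since `μ ≥ 1 / (1 + I_out)` the numerator is
at least `1 + S + s₀ / (1 + I_out) + I_in`. Hence the left argument is at least half of the right
one, and halving costs exactly one bit.
-/

open Finset

/-- one-bit gap between the inner set function `E` and the outer
set function `Ē` of the Gaussian MAC-IC-MAC, with Etkin–Tse–Wang private-power
fractions `μ = min{1, 1/I_out}` and `μ' = min{1, 1/I_in}`. -/
theorem one_bit_gap_E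
    (J : Type*) [Fintype J] (s : J → ℝ) (hs : ∀ j, 0 ≤ s j)
    (s0 : ℝ) (hs0 : 0 ≤ s0)
    (Iout Iin : ℝ) (hIout : 0 < Iout) (hIin : 0 < Iin) :
    Real.logb 2 (1 + (min 1 (1 / Iout) * s0 + (∑ j, s j) +
        (1 - min 1 (1 / Iin)) * Iin) / (1 + min 1 (1 / Iin) * Iin))
      ≥ Real.logb 2 (1 + (∑ j, s j) + s0 / (1 + Iout) + Iin) - 1 := by
  have hS : 0 ≤ ∑ j, s j := Finset.sum_nonneg fun j _ => hs j
  have hμ : s0 / (1 + Iout) ≤ min 1 (1 / Iout) * s0 := by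
    rw [div_eq_mul_one_div, mul_comm]
    refine mul_le_mul_of_nonneg_right (le_min ?_ ?_) hs0
    · rw [div_le_one (by linarith)]
      linarith
    · exact one_div_le_one_div_of_le hIout (by linarith)
  have hpriv_le : min 1 (1 / Iin) * Iin ≤ 1 :=
    (mul_le_mul_of_nonneg_right (min_le_right _ _) hIin.le).trans_eq
      (one_div_mul_cancel hIin.ne')
  have hpriv_nonneg : 0 ≤ min 1 (1 / Iin) * Iin := by positivity
  have hq : 0 ≤ s0 / (1 + Iout) := by positivity
  generalize min 1 (1 / Iout) * s0 = a at *
  generalize min 1 (1 / Iin) = m at *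
  generalize s0 / (1 + Iout) = q at *
  generalize ∑ j, s j = S at *
  have hB : 0 < 1 + S + q + Iin := by linarith
  -- Subtracting one bit is halving the argument of the logarithm.
  have hhalf : Real.logb 2 (1 + S + q + Iin) - 1 = Real.logb 2 ((1 + S + q + Iin) / 2) := by
    rw [Real.logb_div hB.ne' two_ne_zero, Real.logb_self_eq_one one_lt_two]
  rw [ge_iff_le, hhalf]
  refine Real.logb_le_logb_of_le one_lt_two (by linarith) ?_
  have hD : 0 < 1 + m * Iin := by linarith
  have hE : 1 + (a + S + (1 - m) * Iin) / (1 + m * Iin) = (1 + S + a + Iin) / (1 + m * Iin) := by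
    field_simp
    ring
  rw [hE]
  exact div_le_div₀ (by linarith) (by linarith) hD (by linarith)
end

section
/- Let J be a finite index set, s_j ≥ 0 (j ∈ J) be reals, and I_in > 0 be a real. Set μ' = min{1, 1/I_in}. Then log₂(1 + (Σ_{j∈J} s_j + I_in)/(1 + μ'·I_in)) ≥ log₂(1 + Σ_{j∈J} s_j + I_in) − 1. -/
/-!
Since `μ' ≤ 1 / I_in`, the denominator `1 + μ' I_in` is at most `2`. The argument of the inner
logarithm is therefore at least `1 + (S + I_in) / 2 ≥ (1 + S + I_in) / 2`, where `S` is the sum of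
the `s j`, and halving the argument of `log₂` costs exactly one bit.
-/

open Finset

/-- one-bit gap between the inner set function `G` and the outer
set function `Ḡ` of the Gaussian MAC-IC-MAC, with Etkin–Tse–Wang private-power
fraction `μ' = min{1, 1/I_in}`. -/
theorem one_bit_gap_G
    (J : Type*) [Fintype J] (s : J → ℝ) (hs : ∀ j, 0 ≤ s j)
    (Iin : ℝ) (hIin : 0 < Iin) :
    Real.logb 2 (1 + ((∑ j, s j) + Iin) / (1 + min 1 (1 / Iin) * Iin))
      ≥ Real.logb 2 (1 + (∑ j, s j) + Iin) - 1 := by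
  have hS : 0 ≤ ∑ j, s j := Finset.sum_nonneg fun j _ => hs j
  set S := ∑ j, s j
  have hpos : 0 < min 1 (1 / Iin) * Iin := by positivity
  -- The private-power fraction puts the residual interference at or below the noise level.
  have hle : min 1 (1 / Iin) * Iin ≤ 1 := by
    calc min 1 (1 / Iin) * Iin ≤ 1 / Iin * Iin := by gcongr; exact min_le_right _ _
      _ = 1 := by field_simp
  have hhalf : (S + Iin) / 2 ≤ (S + Iin) / (1 + min 1 (1 / Iin) * Iin) := by
    apply div_le_div_of_nonneg_left <;> linarith
  have hlog : Real.logb 2 (1 + S + Iin) - 1 = Real.logb 2 ((1 + S + Iin) / 2) := by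
    rw [Real.logb_div (by positivity) two_ne_zero, Real.logb_self_eq_one one_lt_two]
  rw [ge_iff_le, hlog]
  exact Real.logb_le_logb_of_le one_lt_two (by positivity) (by linarith)
end

section
/- Fix integers K_a, K_b ≥ 1, nonnegative reals SNR_{ij} for i ∈ {a,b} and j ∈ {0,…,K_i−1}, and positive reals INR_a, INR_b. If a componentwise nonnegative rate tuple (R_a, R_b) ∈ ℝ^{K_a} × ℝ^{K_b} satisfies the seven generic inequality families for the outer Gaussian set functions (Ā_i, B̄_i, Ē_i, Ḡ_i), then the tuple obtained by subtracting 1 from every coordinate of R_a and of R_b satisfies the seven generic inequality families for the inner Gaussian set functions (A_i, B_i, E_i, G_i). In other words, the inner and outer bounds for the Gaussian MAC-IC-MAC differ by at most one bit per user. -/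
/-!
Each inner set function is within one bit of its outer counterpart. The private interference
power `μ · INR` is at most `1`, so dividing by `1 + μ · INR` at most halves the argument of the
logarithm (`gaussC_sub_one_le_div`), and `μ ≥ 1 / (1 + INR)` makes the remaining power terms no
smaller than in the outer bound. On the other side, every rate sum runs over a nonempty set of
users, so it drops by at least one bit when each rate does (`sum_sub_one_le`). In each of the
seven families the number of rate sums on the left equals the number of set functions on the
right, so the losses balance.
-/

open Finset

/-- `C(x) = log₂(1+x)`. -/
noncomputable def gaussC (x : ℝ) : ℝ := Real.logb 2 (1 + x)

/-- The seven generic inequality families of the MAC-IC-MAC region. -/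
def GenericRegion {na nb : ℕ} [NeZero na] [NeZero nb]
    (Ra : Fin na → ℝ) (Rb : Fin nb → ℝ)
    (Aa Ba Ea Ga : Finset (Fin na) → ℝ)
    (Ab Bb Eb Gb : Finset (Fin nb) → ℝ) : Prop :=
  ∀ (Υa Ωa : Finset (Fin na)) (Υb Ωb : Finset (Fin nb)),
    0 ∈ Υa → Ωa.Nonempty → 0 ∈ Υb → Ωb.Nonempty →
      (∑ j ∈ Ωa, Ra j) ≤ Ba Ωa ∧
      (∑ j ∈ Ωb, Rb j) ≤ Bb Ωb ∧
      (∑ j ∈ Υa, Ra j) + (∑ j ∈ Ωb, Rb j) ≤ Aa Υa + Gb Ωb ∧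
      (∑ j ∈ Ωa, Ra j) + (∑ j ∈ Υb, Rb j) ≤ Ab Υb + Ga Ωa ∧
      (∑ j ∈ Υa, Ra j) + (∑ j ∈ Υb, Rb j) ≤ Ea Υa + Eb Υb ∧
      (∑ j ∈ Υa, Ra j) + (∑ j ∈ Ωa, Ra j) + (∑ j ∈ Υb, Rb j)
        ≤ Aa Υa + Ga Ωa + Eb Υb ∧
      (∑ j ∈ Υa, Ra j) + (∑ j ∈ Ωb, Rb j) + (∑ j ∈ Υb, Rb j)
        ≤ Ab Υb + Gb Ωb + Ea Υa

/-- Inner Gaussian set function `A` of a cell with direct SNRs `SNR`,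
outgoing INR `Iout` and incoming INR `Iin`. -/
noncomputable def innerA {n : ℕ} [NeZero n] (SNR : Fin n → ℝ) (Iout Iin : ℝ)
    (Υ : Finset (Fin n)) : ℝ :=
  gaussC ((min 1 (1 / Iout) * SNR 0 + ∑ j ∈ Υ.erase 0, SNR j) /
    (1 + min 1 (1 / Iin) * Iin))

/-- Inner Gaussian set function `B`. -/
noncomputable def innerB {n : ℕ} (SNR : Fin n → ℝ) (Iin : ℝ)
    (Ω : Finset (Fin n)) : ℝ :=
  gaussC ((∑ j ∈ Ω, SNR j) / (1 + min 1 (1 / Iin) * Iin))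

/-- Inner Gaussian set function `E`. -/
noncomputable def innerE {n : ℕ} [NeZero n] (SNR : Fin n → ℝ) (Iout Iin : ℝ)
    (Υ : Finset (Fin n)) : ℝ :=
  gaussC ((min 1 (1 / Iout) * SNR 0 + (∑ j ∈ Υ.erase 0, SNR j) +
    (1 - min 1 (1 / Iin)) * Iin) / (1 + min 1 (1 / Iin) * Iin))

/-- Inner Gaussian set function `G`. -/
noncomputable def innerG {n : ℕ} (SNR : Fin n → ℝ) (Iin : ℝ)
    (Ω : Finset (Fin n)) : ℝ :=
  gaussC (((∑ j ∈ Ω, SNR j) + Iin) / (1 + min 1 (1 / Iin) * Iin))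

/-- Outer Gaussian set function `Ā`. -/
noncomputable def outerA {n : ℕ} [NeZero n] (SNR : Fin n → ℝ) (Iout : ℝ)
    (Υ : Finset (Fin n)) : ℝ :=
  gaussC ((∑ j ∈ Υ.erase 0, SNR j) + SNR 0 / (1 + Iout))

/-- Outer Gaussian set function `B̄`. -/
noncomputable def outerB {n : ℕ} (SNR : Fin n → ℝ) (Ω : Finset (Fin n)) : ℝ :=
  gaussC (∑ j ∈ Ω, SNR j)

/-- Outer Gaussian set function `Ē`. -/
noncomputable def outerE {n : ℕ} [NeZero n] (SNR : Fin n → ℝ) (Iout Iin : ℝ)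
    (Υ : Finset (Fin n)) : ℝ :=
  gaussC ((∑ j ∈ Υ.erase 0, SNR j) + SNR 0 / (1 + Iout) + Iin)

/-- Outer Gaussian set function `Ḡ`. -/
noncomputable def outerG {n : ℕ} (SNR : Fin n → ℝ) (Iin : ℝ)
    (Ω : Finset (Fin n)) : ℝ :=
  gaussC ((∑ j ∈ Ω, SNR j) + Iin)

/-- A factor of two inside the logarithm costs one bit. -/
lemma gaussC_sub_one_le {x y : ℝ} (hx : 0 ≤ x) (h : 1 + x ≤ 2 * (1 + y)) :
    gaussC x - 1 ≤ gaussC y := by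
  unfold gaussC
  have hy : 0 < 1 + y := by linarith
  have h2 : Real.logb 2 (2 * (1 + y)) = 1 + Real.logb 2 (1 + y) := by
    rw [Real.logb_mul (by norm_num) hy.ne', Real.logb_self_eq_one (by norm_num)]
  have h3 : Real.logb 2 (1 + x) ≤ Real.logb 2 (2 * (1 + y)) :=
    Real.logb_le_logb_of_le (by norm_num) (by linarith) h
  linarith

/-- The private-interference power `m = μ · INR ≤ 1` at most doubles the noise, and appears in
the total received power as well: the inner SINR is `y / (1 + m)` with `x ≤ y + m`. -/
lemma gaussC_sub_one_le_div {x y m : ℝ} (hx : 0 ≤ x) (hm : 0 ≤ m) (hm1 : m ≤ 1)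
    (h : x ≤ y + m) : gaussC x - 1 ≤ gaussC (y / (1 + m)) := by
  refine gaussC_sub_one_le hx ?_
  have hD : 0 < 1 + m := by linarith
  have e : 2 * (1 + y / (1 + m)) = 2 * (1 + m + y) / (1 + m) := by
    field_simp
  rw [e, le_div_iff₀ hD]
  nlinarith

lemma min_mul_nonneg {I : ℝ} (hI : 0 < I) : 0 ≤ min 1 (1 / I) * I := by positivity

lemma min_mul_le_one {I : ℝ} (hI : 0 < I) : min 1 (1 / I) * I ≤ 1 := by
  calc min 1 (1 / I) * I ≤ 1 / I * I := by gcongr; exact min_le_right _ _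
    _ = 1 := by field_simp

/-- The private power fraction `μ` of the inner bound dominates the genie's `1 / (1 + INR)`. -/
lemma div_one_add_le_min_mul {I s : ℝ} (hI : 0 < I) (hs : 0 ≤ s) :
    s / (1 + I) ≤ min 1 (1 / I) * s := by
  have h : 1 / (1 + I) ≤ min 1 (1 / I) := by
    refine le_min ?_ ?_
    · rw [div_le_one (by linarith)]; linarith
    · exact one_div_le_one_div_of_le hI (by linarith)
  calc s / (1 + I) = 1 / (1 + I) * s := by ring
    _ ≤ _ := by gcongr

section SetFunctions

variable {n : ℕ} {SNR : Fin n → ℝ} {Iout Iin : ℝ}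

lemma outerA_sub_one_le [NeZero n] (hS : ∀ j, 0 ≤ SNR j) (ho : 0 < Iout) (hi : 0 < Iin)
    (Υ : Finset (Fin n)) : outerA SNR Iout Υ - 1 ≤ innerA SNR Iout Iin Υ := by
  have h0 := hS 0
  have hs : 0 ≤ ∑ j ∈ Υ.erase 0, SNR j := Finset.sum_nonneg fun j _ => hS j
  refine gaussC_sub_one_le_div (by positivity) (min_mul_nonneg hi) (min_mul_le_one hi) ?_
  linarith [div_one_add_le_min_mul ho h0, min_mul_nonneg hi]

lemma outerB_sub_one_le (hS : ∀ j, 0 ≤ SNR j) (hi : 0 < Iin)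
    (Ω : Finset (Fin n)) : outerB SNR Ω - 1 ≤ innerB SNR Iin Ω := by
  have hs : 0 ≤ ∑ j ∈ Ω, SNR j := Finset.sum_nonneg fun j _ => hS j
  refine gaussC_sub_one_le_div hs (min_mul_nonneg hi) (min_mul_le_one hi) ?_
  linarith [min_mul_nonneg hi]

lemma outerE_sub_one_le [NeZero n] (hS : ∀ j, 0 ≤ SNR j) (ho : 0 < Iout) (hi : 0 < Iin)
    (Υ : Finset (Fin n)) : outerE SNR Iout Iin Υ - 1 ≤ innerE SNR Iout Iin Υ := by
  have h0 := hS 0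
  have hs : 0 ≤ ∑ j ∈ Υ.erase 0, SNR j := Finset.sum_nonneg fun j _ => hS j
  refine gaussC_sub_one_le_div (by positivity) (min_mul_nonneg hi) (min_mul_le_one hi) ?_
  linarith [div_one_add_le_min_mul ho h0]

lemma outerG_sub_one_le (hS : ∀ j, 0 ≤ SNR j) (hi : 0 < Iin)
    (Ω : Finset (Fin n)) : outerG SNR Iin Ω - 1 ≤ innerG SNR Iin Ω := by
  have hs : 0 ≤ ∑ j ∈ Ω, SNR j := Finset.sum_nonneg fun j _ => hS j
  refine gaussC_sub_one_le_div (by positivity) (min_mul_nonneg hi) (min_mul_le_one hi) ?_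
  linarith [min_mul_nonneg hi]

lemma sum_sub_one_le (R : Fin n → ℝ) {S : Finset (Fin n)} (hS : S.Nonempty) :
    ∑ j ∈ S, (R j - 1) ≤ (∑ j ∈ S, R j) - 1 := by
  have h : (1 : ℝ) ≤ S.card := by exact_mod_cast hS.card_pos
  simp only [Finset.sum_sub_distrib, Finset.sum_const, nsmul_eq_mul, mul_one]
  linarith

end SetFunctions

/-- the inner and outer bounds of the Gaussian MAC-IC-MAC differ
by at most one bit per user: any componentwise nonnegative rate tuple in the
outer region, reduced by one bit in every coordinate, lies in the inner
region.  `INRa` (resp. `INRb`) is the INR caused by transmitter `a0`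
(resp. `b0`) at the other cell's receiver. -/
theorem gaussian_mac_ic_mac_one_bit_gap
    (Ka Kb : ℕ)
    (SNRa : Fin (Ka + 1) → ℝ) (SNRb : Fin (Kb + 1) → ℝ)
    (hSNRa : ∀ j, 0 ≤ SNRa j) (hSNRb : ∀ j, 0 ≤ SNRb j)
    (INRa INRb : ℝ) (hINRa : 0 < INRa) (hINRb : 0 < INRb)
    (Ra : Fin (Ka + 1) → ℝ) (Rb : Fin (Kb + 1) → ℝ)
    (hRa : ∀ j, 0 ≤ Ra j) (hRb : ∀ j, 0 ≤ Rb j)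
    (hout : GenericRegion Ra Rb
      (outerA SNRa INRa) (outerB SNRa) (outerE SNRa INRa INRb)
      (outerG SNRa INRb)
      (outerA SNRb INRb) (outerB SNRb) (outerE SNRb INRb INRa)
      (outerG SNRb INRa)) :
    GenericRegion (fun j => Ra j - 1) (fun j => Rb j - 1)
      (innerA SNRa INRa INRb) (innerB SNRa INRb) (innerE SNRa INRa INRb)
      (innerG SNRa INRb)
      (innerA SNRb INRb INRa) (innerB SNRb INRa) (innerE SNRb INRb INRa)
      (innerG SNRb INRa) := by
  intro Υa Ωa Υb Ωb hΥa hΩa hΥb hΩb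
  obtain ⟨h1, h2, h3, h4, h5, h6, h7⟩ := hout Υa Ωa Υb Ωb hΥa hΩa hΥb hΩb
  have sΥa := sum_sub_one_le Ra ⟨0, hΥa⟩
  have sΩa := sum_sub_one_le Ra hΩa
  have sΥb := sum_sub_one_le Rb ⟨0, hΥb⟩
  have sΩb := sum_sub_one_le Rb hΩb
  have Aa := outerA_sub_one_le hSNRa hINRa hINRb Υa
  have Ab := outerA_sub_one_le hSNRb hINRb hINRa Υb
  have Ba := outerB_sub_one_le hSNRa hINRb Ωa
  have Bb := outerB_sub_one_le hSNRb hINRa Ωb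
  have Ea := outerE_sub_one_le hSNRa hINRa hINRb Υa
  have Eb := outerE_sub_one_le hSNRb hINRb hINRa Υb
  have Ga := outerG_sub_one_le hSNRa hINRb Ωa
  have Gb := outerG_sub_one_le hSNRb hINRa Ωb
  refine ⟨?_, ?_, ?_, ?_, ?_, ?_, ?_⟩ <;> linarith
end

section
/- Let J be a finite (possibly empty) index set, α_j ≥ 0 (j ∈ J), and α₀ ≥ 0, β ≥ 0, γ ≥ 0 be reals. Then the function ρ ↦ log₂(1 + (min{1, ρ^{−β}}·ρ^{α₀} + Σ_{j∈J} ρ^{α_j} + (1 − min{1, ρ^{−γ}})·ρ^{γ}) / (1 + min{1, ρ^{−γ}}·ρ^{γ})) / log₂(ρ) tends, as ρ → ∞, to the maximum of the following quantities: (α₀ − β)⁺, max_{j∈J} α_j (interpreted as 0 if J is empty), and γ, where (x)⁺ = max{x, 0}. -/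
/-!
For `ρ > 1` both minima are attained by the powers of `ρ`, so `μ' ρ^γ = 1` and the argument of the
logarithm collapses to `(1 + ρ^(α₀-β) + ∑ j, ρ^(α j) + ρ^γ) / 2`. With `M` the claimed limit, every
term of this sum is at most `ρ^M`, and one of them (the `1` if `M = 0`) equals `ρ^M`. Hence the
argument lies between `ρ^M / 2` and a constant times `ρ^M`, and constant factors do not affect the
growth exponent (`tendsto_logb_div_logb_of_rpow_bounds`).
-/

open Finset Filter

/-- Maximum of a finite family of reals, interpreted as `0` when the index
set is empty (folding `max` with base point `0`). -/
def finMax0 {J : Type*} [Fintype J] (α : J → ℝ) : ℝ :=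
  (Finset.univ : Finset J).fold max 0 α

/-- A function squeezed between two positive multiples of `ρ ^ M` has growth exponent `M`. -/
lemma tendsto_logb_div_logb_of_rpow_bounds {f : ℝ → ℝ} {M c C : ℝ} (hc : 0 < c) (hC : 0 < C)
    (hlow : ∀ ρ, 1 < ρ → c * ρ ^ M ≤ f ρ) (hupp : ∀ ρ, 1 < ρ → f ρ ≤ C * ρ ^ M) :
    Tendsto (fun ρ => Real.logb 2 (f ρ) / Real.logb 2 ρ) atTop (nhds M) := by
  have hlim : ∀ a : ℝ, Tendsto (fun ρ => Real.logb 2 a / Real.logb 2 ρ + M) atTop (nhds M) := by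
    intro a
    simpa using ((Real.tendsto_logb_atTop (by norm_num : (1 : ℝ) < 2)).const_div_atTop
      (Real.logb 2 a)).add_const M
  have hscale : ∀ a : ℝ, 0 < a → ∀ ρ : ℝ, 1 < ρ →
      Real.logb 2 a / Real.logb 2 ρ + M = Real.logb 2 (a * ρ ^ M) / Real.logb 2 ρ := by
    intro a ha ρ hρ
    have hρ0 : 0 < ρ := by linarith
    have hlog : 0 < Real.logb 2 ρ := Real.logb_pos (by norm_num) hρ
    rw [Real.logb_mul ha.ne' (Real.rpow_pos_of_pos hρ0 M).ne', Real.logb_rpow_eq_mul_logb_of_pos hρ0]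
    field_simp
  refine tendsto_of_tendsto_of_tendsto_of_le_of_le' (hlim c) (hlim C) ?_ ?_
  all_goals
    filter_upwards [eventually_gt_atTop (1 : ℝ)] with ρ hρ
    have hlog : 0 < Real.logb 2 ρ := Real.logb_pos (by norm_num) hρ
    have hpow : 0 < ρ ^ M := Real.rpow_pos_of_pos (by linarith) M
  · rw [hscale c hc ρ hρ]
    exact div_le_div_of_nonneg_right
      (Real.logb_le_logb_of_le (by norm_num) (by positivity) (hlow ρ hρ)) hlog.le
  · rw [hscale C hC ρ hρ]
    exact div_le_div_of_nonneg_right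
      (Real.logb_le_logb_of_le (by norm_num)
        (lt_of_lt_of_le (by positivity) (hlow ρ hρ)) (hupp ρ hρ)) hlog.le

lemma le_finMax0 {J : Type*} [Fintype J] (α : J → ℝ) (j : J) : α j ≤ finMax0 α :=
  (Finset.le_fold_max (α j)).2 (Or.inr ⟨j, Finset.mem_univ j, le_rfl⟩)

lemma finMax0_le_zero_or_exists {J : Type*} [Fintype J] (α : J → ℝ) :
    finMax0 α ≤ 0 ∨ ∃ j, finMax0 α ≤ α j := by
  simpa using (Finset.le_fold_max (s := Finset.univ) (f := α) (b := 0) (finMax0 α)).1 le_rfl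

lemma inner_E_arg_eq {ρ : ℝ} (hρ : 1 < ρ) {β γ : ℝ} (hβ : 0 ≤ β) (hγ : 0 ≤ γ) (α₀ S : ℝ) :
    1 + (min 1 (ρ ^ (-β)) * ρ ^ α₀ + S + (1 - min 1 (ρ ^ (-γ))) * ρ ^ γ) /
        (1 + min 1 (ρ ^ (-γ)) * ρ ^ γ) = (1 + ρ ^ (α₀ - β) + S + ρ ^ γ) / 2 := by
  have hρ0 : 0 < ρ := by linarith
  have h1 : ρ ^ (-β) * ρ ^ α₀ = ρ ^ (α₀ - β) := by
    rw [← Real.rpow_add hρ0]; congr 1; ring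
  have h2 : ρ ^ (-γ) * ρ ^ γ = 1 := by
    rw [← Real.rpow_add hρ0]; simp
  rw [min_eq_right (Real.rpow_le_one_of_one_le_of_nonpos hρ.le (by linarith)),
    min_eq_right (Real.rpow_le_one_of_one_le_of_nonpos hρ.le (by linarith)), sub_mul, h1, h2]
  ring

/-- the GDoF exponent of the Etkin–Tse–Wang inner set function
`E`: with `SNR₀ = ρ^{α₀}`, `SNR_j = ρ^{α_j}`, outgoing INR `ρ^β`, incoming
INR `ρ^γ`, `μ = min{1, ρ^{−β}}`, `μ' = min{1, ρ^{−γ}}`,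
`log₂(1 + (μ·ρ^{α₀} + Σ_j ρ^{α_j} + (1−μ')·ρ^γ)/(1 + μ'·ρ^γ)) / log₂ ρ`
tends to `max{(α₀−β)⁺, max_j α_j (0 if J empty), γ}` as `ρ → ∞`. -/
theorem gdof_limit_inner_E
    (J : Type*) [Fintype J]
    (α : J → ℝ) (hα : ∀ j, 0 ≤ α j)
    (α₀ β γ : ℝ) (hα₀ : 0 ≤ α₀) (hβ : 0 ≤ β) (hγ : 0 ≤ γ) :
    Tendsto
      (fun ρ : ℝ => Real.logb 2
          (1 + (min 1 (ρ ^ (-β)) * ρ ^ α₀ + (∑ j, ρ ^ (α j)) +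
              (1 - min 1 (ρ ^ (-γ))) * ρ ^ γ) /
            (1 + min 1 (ρ ^ (-γ)) * ρ ^ γ)) /
        Real.logb 2 ρ)
      atTop
      (nhds (max (max (max (α₀ - β) 0) (finMax0 α)) γ)) := by
  set M := max (max (max (α₀ - β) 0) (finMax0 α)) γ with hM
  have hM1 : α₀ - β ≤ M := by simp [hM]
  have hM2 : 0 ≤ M := by simp [hM]
  have hM3 : finMax0 α ≤ M := by simp [hM]
  have hM4 : γ ≤ M := by simp [hM]
  refine tendsto_logb_div_logb_of_rpow_bounds (c := 1 / 2) (C := (Fintype.card J + 3) / 2)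
    (by norm_num) (by positivity) ?_ ?_
  all_goals
    intro ρ hρ
    rw [inner_E_arg_eq hρ hβ hγ]
    have hmono : ∀ {a b : ℝ}, a ≤ b → ρ ^ a ≤ ρ ^ b := Real.rpow_le_rpow_of_exponent_le hρ.le
    have hnonneg : ∀ a : ℝ, 0 ≤ ρ ^ a := Real.rpow_nonneg (by linarith)
  · have hS : 0 ≤ ∑ j, ρ ^ α j := Finset.sum_nonneg fun j _ => hnonneg _
    have h1 := hnonneg (α₀ - β)
    have h2 := hnonneg γ
    suffices h : ρ ^ M ≤ 1 + ρ ^ (α₀ - β) + ∑ j, ρ ^ α j + ρ ^ γ by linarith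
    have hcases : M ≤ α₀ - β ∨ M ≤ 0 ∨ M ≤ finMax0 α ∨ M ≤ γ := by
      rcases le_max_iff.1 hM.le with h | h
      · rcases le_max_iff.1 h with h | h
        · rcases le_max_iff.1 h with h | h <;> simp [h]
        · simp [h]
      · simp [h]
    have hzero : M ≤ 0 → ρ ^ M ≤ 1 := Real.rpow_le_one_of_one_le_of_nonpos hρ.le
    rcases hcases with h | h | h | h
    · linarith [hmono h]
    · linarith [hzero h]
    · rcases finMax0_le_zero_or_exists α with h' | ⟨j, hj⟩
      · linarith [hzero (h.trans h')]
      · have hterm : ρ ^ α j ≤ ∑ j, ρ ^ α j :=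
          Finset.single_le_sum (fun i _ => hnonneg (α i)) (Finset.mem_univ j)
        linarith [hmono (h.trans hj)]
    · linarith [hmono h]
  · have hS : ∑ j, ρ ^ α j ≤ Fintype.card J * ρ ^ M := by
      simpa using Finset.sum_le_card_nsmul Finset.univ (fun j => ρ ^ α j) (ρ ^ M)
        fun j _ => hmono ((le_finMax0 α j).trans hM3)
    linarith [hmono hM1, hmono hM4, Real.one_le_rpow hρ.le hM2]
end

section
/- Fix an integer K ≥ 2 and a real α ≥ 0, and let both cells have K users with the symmetric GDoF set functions a(Υ) = (1−α)⁺ if Υ = {0} and a(Υ) = 1 otherwise, b(Ω) = 1, e(Υ) = max{a(Υ), α}, g(Ω) = max{1, α}. Then the supremum of all d ≥ 0 such that the all-equal rate tuple (d, …, d) ∈ ℝ^{2K} satisfies the seven generic inequality families equals: 1/K if 0 ≤ α ≤ 1 − 1/K; (2 − α)/(K + 1) if 1 − 1/K ≤ α ≤ 1; α/(K + 1) if 1 ≤ α ≤ 1 + 1/K; and 1/K if α ≥ 1 + 1/K. Equivalently, this supremum equals min{1/K, max{2 − α, α}/(K + 1)}. -/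
/-!
Write `K = k + 2`. Since `max (2 - α) α = (1 - α)⁺ + max 1 α`, the two terms of the minimum are
the constraints `K d ≤ b = 1` (`Ω` the full cell) and `(K + 1) d ≤ a({0}) + g` (`Υ = {0}`, `Ω` the
full cell), so every feasible `d` is bounded by the minimum.

Conversely, all seven families follow from three bounds on the sums of the constant vector `d`:
`R_Ω ≤ 1`, `R_Υ ≤ e(Υ)`, and `R_Υ + R_Ω ≤ a(Υ) + g(Ω)`; the three-term families are sums of the
last two. These bounds hold when `d` satisfies the two constraints above. The case `Υ = {0}` of
the second one uses `d ≤ 1/K ≤ 1/2 ≤ max (1 - α) α`. Hence the minimum is the greatest element of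
the feasible set.
-/

open Finset

/-- Symmetric GDoF set function `a(Υ)`: `(1−α)⁺` if `Υ = {0}`, else `1`. -/
noncomputable def symA {K : ℕ} [NeZero K] (α : ℝ) (Υ : Finset (Fin K)) : ℝ :=
  if Υ = {0} then max (1 - α) 0 else 1

/-- Symmetric GDoF set function `b(Ω) = 1`. -/
noncomputable def symB {K : ℕ} (_Ω : Finset (Fin K)) : ℝ := 1

/-- Symmetric GDoF set function `e(Υ) = max{a(Υ), α}`. -/
noncomputable def symE {K : ℕ} [NeZero K] (α : ℝ) (Υ : Finset (Fin K)) : ℝ :=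
  max (symA α Υ) α

/-- Symmetric GDoF set function `g(Ω) = max{1, α}`. -/
noncomputable def symG {K : ℕ} (α : ℝ) (_Ω : Finset (Fin K)) : ℝ := max 1 α

theorem max_two_sub_eq (α : ℝ) : max (2 - α) α = max (1 - α) 0 + max 1 α := by
  rcases le_total α 1 with h | h
  · rw [max_eq_left (by linarith), max_eq_left (by linarith), max_eq_left h]; ring
  · rw [max_eq_right (by linarith), max_eq_right (by linarith), max_eq_right h]; ring

theorem sum_const_le {k : ℕ} {d : ℝ} (hd : 0 ≤ d) (S : Finset (Fin (k + 2))) :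
    ∑ _j ∈ S, d ≤ ((k : ℝ) + 2) * d := by
  rw [Finset.sum_const, nsmul_eq_mul]
  have h : (S.card : ℝ) ≤ ((k + 2 : ℕ) : ℝ) := by
    exact_mod_cast (Finset.card_le_univ S).trans_eq (Fintype.card_fin _)
  push_cast at h
  exact mul_le_mul_of_nonneg_right h hd

/-- The seven families at `(d, …, d)` reduce to two inequalities: the single-cell sum bound and
the bound pairing `Υ = {0}` with a full cell. -/
theorem genericRegion_const_iff (k : ℕ) (α : ℝ) {d : ℝ} (hd : 0 ≤ d) :
    GenericRegion (na := k + 2) (nb := k + 2)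
          (fun _ => d) (fun _ => d)
          (symA α) symB (symE α) (symG α)
          (symA α) symB (symE α) (symG α) ↔
      ((k : ℝ) + 2) * d ≤ 1 ∧ ((k : ℝ) + 2 + 1) * d ≤ max (2 - α) α := by
  constructor
  · intro h
    obtain ⟨h1, -, h3, -⟩ := h {0} univ {0} univ (by simp) univ_nonempty (by simp) univ_nonempty
    simp only [symA, symB, symG, sum_const, card_univ, Fintype.card_fin, nsmul_eq_mul,
      card_singleton, if_true] at h1 h3
    push_cast at h1 h3
    rw [max_two_sub_eq]
    exact ⟨h1, by linarith⟩
  · rintro ⟨h1, h2⟩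
    rw [max_two_sub_eq] at h2
    have hk : (0 : ℝ) ≤ k := k.cast_nonneg
    have hd2 : 2 * d ≤ 1 := by nlinarith
    have hΩ : ∀ Ω : Finset (Fin (k + 2)), ∑ _j ∈ Ω, d ≤ 1 := fun Ω =>
      (sum_const_le hd Ω).trans h1
    have hG : ∀ Ω : Finset (Fin (k + 2)), 1 ≤ symG α Ω := fun Ω => le_max_left _ _
    have hE : ∀ Υ : Finset (Fin (k + 2)), ∑ _j ∈ Υ, d ≤ symE α Υ := by
      intro Υ
      by_cases hΥ : Υ = {0}
      · have e1 : 1 - α ≤ symE α Υ := by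
          simp [symE, symA, hΥ]
        have e2 : α ≤ symE α Υ := le_max_right _ _
        have e3 : ∑ _j ∈ Υ, d = d := by simp [hΥ]
        linarith
      · have e1 : 1 ≤ symE α Υ := by
          simp [symE, symA, hΥ]
        exact (hΩ Υ).trans e1
    have hAG : ∀ Υ Ω : Finset (Fin (k + 2)),
        ∑ _j ∈ Υ, d + ∑ _j ∈ Ω, d ≤ symA α Υ + symG α Ω := by
      intro Υ Ω
      by_cases hΥ : Υ = {0}
      · have e1 : symA α Υ = max (1 - α) 0 := by simp [symA, hΥ]
        have e2 : ∑ _j ∈ Υ, d = d := by simp [hΥ]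
        have e3 : symG α Ω = max 1 α := rfl
        have e4 := sum_const_le hd Ω
        linarith
      · have e1 : symA α Υ = 1 := by simp [symA, hΥ]
        have := hΩ Υ
        have := hΩ Ω
        have := hG Ω
        linarith
    intro Υa Ωa Υb Ωb _ _ _ _
    refine ⟨hΩ Ωa, hΩ Ωb, hAG Υa Ωb, ?_, add_le_add (hE Υa) (hE Υb),
      add_le_add (hAG Υa Ωa) (hE Υb), ?_⟩
    · linarith [hAG Υb Ωa]
    · linarith [hAG Υb Ωb, hE Υa]

/-- the symmetric GDoF of the `K`-user-per-cell symmetric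
Gaussian MAC-IC-MAC (`K = k + 2 ≥ 2`):  the supremum of all `d ≥ 0` such that
the all-equal tuple `(d,…,d)` satisfies the seven generic inequality families
for the symmetric GDoF set functions equals
`min{1/K, max{2−α, α}/(K+1)}` (equivalently, the V-shaped curve with flat
shoulders: `1/K` for `α ≤ 1−1/K`, `(2−α)/(K+1)` for `1−1/K ≤ α ≤ 1`,
`α/(K+1)` for `1 ≤ α ≤ 1+1/K`, and `1/K` for `α ≥ 1+1/K`). -/
theorem symmetric_gdof_mac_ic_mac
    (k : ℕ) (α : ℝ) (hα : 0 ≤ α) :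
    sSup {d : ℝ | 0 ≤ d ∧
        GenericRegion (na := k + 2) (nb := k + 2)
          (fun _ => d) (fun _ => d)
          (symA α) symB (symE α) (symG α)
          (symA α) symB (symE α) (symG α)}
      = min (1 / ((k : ℝ) + 2))
          (max (2 - α) α / (((k : ℝ) + 2) + 1)) := by
  have hk : (0 : ℝ) ≤ k := k.cast_nonneg
  have hK : (0 : ℝ) < (k : ℝ) + 2 := by linarith
  have hK1 : (0 : ℝ) < (k : ℝ) + 2 + 1 := by linarith
  apply IsGreatest.csSup_eq
  constructor
  · have h0 : 0 ≤ min (1 / ((k : ℝ) + 2)) (max (2 - α) α / (((k : ℝ) + 2) + 1)) :=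
      le_min (by positivity) (div_nonneg (hα.trans (le_max_right _ _)) hK1.le)
    refine ⟨h0, (genericRegion_const_iff k α h0).2 ⟨?_, ?_⟩⟩
    · exact (le_div_iff₀' hK).1 (min_le_left _ _)
    · exact (le_div_iff₀' hK1).1 (min_le_right _ _)
  · rintro d ⟨hd, hR⟩
    obtain ⟨h1, h2⟩ := (genericRegion_const_iff k α hd).1 hR
    exact le_min ((le_div_iff₀' hK).2 h1) ((le_div_iff₀' hK1).2 h2)
end

section
/- Fix an integer K ≥ 2 and a real α ≥ 0 with either α ≤ 1 − 1/K or α ≥ 1 + 1/K, and let both cells have K users with the symmetric GDoF set functions a(Υ) = (1−α)⁺ if Υ = {0} and a(Υ) = 1 otherwise, b(Ω) = 1, e(Υ) = max{a(Υ), α}, g(Ω) = max{1, α}. Then the all-equal rate tuple with every coordinate equal to 1/K satisfies all seven generic inequality families; that is, each cell achieves a full degree of freedom (total symmetric GDoF 1 per cell) in the sufficiently weak (α ≤ 1 − 1/K) and sufficiently strong (α ≥ 1 + 1/K) interference regimes. -/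
/-!
Every one of the seven families is a sum of three single-cell bounds on the rate sums of the
all-`1/K` tuple:
* `R_Ω ≤ 1`, since a cell has `K` users (`sum_rate_le_one`);
* `R_Υ + 1 ≤ a(Υ) + g(Ω)` (`sum_rate_add_one_le`), where `g = max{1, α}` does not depend on `Ω`;
* `R_Υ ≤ e(Υ)` (`sum_rate_le_symE`).

When `Υ ≠ {0}` one has `a(Υ) = 1`, so the last two follow from the first. When `Υ = {0}` the
rate sum is exactly `1/K`, and they follow from `1/K ≤ 1 - α` or `1 + 1/K ≤ α`.
-/

open Finset

/-- Any subset of users carries total rate at most `1`, there being `K = k + 2` of them. -/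
lemma sum_rate_le_one (k : ℕ) (Ω : Finset (Fin (k + 2))) :
    ∑ _j ∈ Ω, 1 / ((k : ℝ) + 2) ≤ 1 := by
  have hcard : (Ω.card : ℝ) ≤ (k : ℝ) + 2 := by
    have h := Finset.card_le_univ Ω
    rw [Fintype.card_fin] at h
    exact_mod_cast h
  have hpos : (0 : ℝ) < (k : ℝ) + 2 := by positivity
  rw [Finset.sum_const, nsmul_eq_mul, mul_one_div, div_le_one hpos]
  exact hcard

/-- If `Υ = {0}`, weak interference gives `1/K ≤ 1 - α`, and strong interference gives
`1/K + 1 ≤ α`; otherwise `a(Υ) = 1`. -/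
lemma sum_rate_add_one_le (k : ℕ) (α : ℝ)
    (hreg : α ≤ 1 - 1 / ((k : ℝ) + 2) ∨ 1 + 1 / ((k : ℝ) + 2) ≤ α)
    (Υ : Finset (Fin (k + 2))) :
    ∑ _j ∈ Υ, 1 / ((k : ℝ) + 2) + 1 ≤ symA α Υ + max 1 α := by
  have h1 := le_max_left 1 α
  have h2 := le_max_right 1 α
  unfold symA
  split_ifs with h
  · rw [h, Finset.sum_singleton]
    have h3 := le_max_left (1 - α) 0
    have h4 := le_max_right (1 - α) 0
    rcases hreg with hr | hr <;> linarith
  · linarith [sum_rate_le_one k Υ]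

/-- If `Υ = {0}`, the rate `1/K` is below `1 - α` in the weak regime and below `α` in the
strong one; otherwise `e(Υ) ≥ 1`. -/
lemma sum_rate_le_symE (k : ℕ) (α : ℝ)
    (hreg : α ≤ 1 - 1 / ((k : ℝ) + 2) ∨ 1 + 1 / ((k : ℝ) + 2) ≤ α)
    (Υ : Finset (Fin (k + 2))) :
    ∑ _j ∈ Υ, 1 / ((k : ℝ) + 2) ≤ symE α Υ := by
  have h1 := le_max_left (symA α Υ) α
  have h2 := le_max_right (symA α Υ) α
  unfold symE
  by_cases h : Υ = {0}
  · have h3 : 1 - α ≤ symA α Υ := by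
      rw [symA, if_pos h]
      exact le_max_left _ _
    have h4 : ∑ _j ∈ Υ, 1 / ((k : ℝ) + 2) = 1 / ((k : ℝ) + 2) := by
      rw [h, Finset.sum_singleton]
    rcases hreg with hr | hr <;> linarith
  · have h3 : symA α Υ = 1 := if_neg h
    linarith [sum_rate_le_one k Υ]

/-- in the sufficiently weak (`α ≤ 1 − 1/K`) and sufficiently
strong (`α ≥ 1 + 1/K`) interference regimes of the symmetric
`K`-user-per-cell Gaussian MAC-IC-MAC (`K = k + 2 ≥ 2`), the all-equal GDoF
tuple with every coordinate `1/K` satisfies all seven generic inequality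
families, i.e. each cell achieves a full degree of freedom. -/
theorem symmetric_gdof_full_dof_shoulders
    (k : ℕ) (α : ℝ) (hα : 0 ≤ α)
    (hreg : α ≤ 1 - 1 / ((k : ℝ) + 2) ∨ 1 + 1 / ((k : ℝ) + 2) ≤ α) :
    GenericRegion (na := k + 2) (nb := k + 2)
      (fun _ => 1 / ((k : ℝ) + 2)) (fun _ => 1 / ((k : ℝ) + 2))
      (symA α) symB (symE α) (symG α)
      (symA α) symB (symE α) (symG α) := by
  intro Υa Ωa Υb Ωb _ _ _ _
  have hΩa := sum_rate_le_one k Ωa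
  have hΩb := sum_rate_le_one k Ωb
  have hAa := sum_rate_add_one_le k α hreg Υa
  have hAb := sum_rate_add_one_le k α hreg Υb
  have hEa := sum_rate_le_symE k α hreg Υa
  have hEb := sum_rate_le_symE k α hreg Υb
  simp only [symB, symG]
  refine ⟨hΩa, hΩb, ?_, ?_, ?_, ?_, ?_⟩ <;> linarith
end

section
/- For α ≥ 0 define d_IC(α) = min{1, max{α, 1−α}, max{α/2, 1−α/2}} (the symmetric GDoF per user of the two-user Gaussian interference channel) and d₂(α) = min{1/2, max{2−α, α}/3} (the symmetric GDoF per user of the (2,2) Gaussian MAC-IC-MAC). Then for every α ≥ 0, 2·d_IC(α)/(d_IC(α)+1) ≤ 2·d₂(α), and the inequality is strict for every α ∈ (0,1) ∪ (1,2); equality holds at α = 0, α = 1, and for all α ≥ 2. Hence time sharing between the interfering and non-interfering transmitters within each cell is GDoF-suboptimal for the MAC-IC-MAC. -/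
/-!
Write `m = max (2 - α) α`, so that `m ≥ 1`, with equality only at `α = 1`, and
`d₂ = min (1/2) (m/3)`, `d_IC ≤ min 1 (m/2)`. Since `x ↦ x / (x + 1)` is increasing,
time sharing achieves per transmitter at most `1/2` (from `d_IC ≤ 1`) and at most
`m / (m + 2) ≤ m / 3` (from `d_IC ≤ m/2` and `m ≥ 1`). For `α ∈ (0, 2)` one has `m < 2`, so
`d_IC < 1`, and both bounds are strict as soon as `α ≠ 1`. The equality cases are evaluations:
`d_IC = 1` and `d₂ = 1/2` at `α = 0` and for `α ≥ 2`; `d_IC = 1/2` and `d₂ = 1/3` at `α = 1`.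
-/

/-- Symmetric GDoF per user of the two-user Gaussian interference channel
(the Etkin–Tse–Wang "W-curve"). -/
noncomputable def dIC (α : ℝ) : ℝ :=
  min 1 (min (max α (1 - α)) (max (α / 2) (1 - α / 2)))

/-- Symmetric GDoF per user of the `(2,2)` Gaussian MAC-IC-MAC. -/
noncomputable def d2 (α : ℝ) : ℝ :=
  min (1 / 2) (max (2 - α) α / 3)

lemma dIC_pos (α : ℝ) : 0 < dIC α := by
  unfold dIC
  refine lt_min one_pos (lt_min ?_ ?_)
  · rcases lt_or_ge 0 α with h | h
    · exact lt_max_of_lt_left h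
    · exact lt_max_of_lt_right (by linarith)
  · rcases lt_or_ge 0 α with h | h
    · exact lt_max_of_lt_left (by linarith)
    · exact lt_max_of_lt_right (by linarith)

lemma dIC_le_one (α : ℝ) : dIC α ≤ 1 := min_le_left _ _

lemma dIC_le_half_max (α : ℝ) : dIC α ≤ max (2 - α) α / 2 := by
  refine (min_le_right _ _).trans ((min_le_right _ _).trans (max_le ?_ ?_))
  · linarith [le_max_right (2 - α) α]
  · linarith [le_max_left (2 - α) α]

lemma one_le_max_two_sub (α : ℝ) : 1 ≤ max (2 - α) α := by
  linarith [le_max_left (2 - α) α, le_max_right (2 - α) α]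

lemma dIC_eq_one_of_two_le {α : ℝ} (h : 2 ≤ α) : dIC α = 1 :=
  min_eq_left (le_min (le_max_of_le_left (by linarith)) (le_max_of_le_left (by linarith)))

lemma d2_eq_half_of_two_le {α : ℝ} (h : 2 ≤ α) : d2 α = 1 / 2 :=
  min_eq_left (by linarith [le_max_right (2 - α) α])

/-- time sharing between the interfering and non-interfering
transmitters of each cell is GDoF-suboptimal for the `(2,2)` MAC-IC-MAC:
for every `α ≥ 0` the time-sharing per-cell sum GDoF `2·d_IC(α)/(d_IC(α)+1)`
is at most the fundamental per-cell sum GDoF `2·d₂(α)`, strictly so for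
`α ∈ (0,1) ∪ (1,2)`, with equality at `α = 0`, `α = 1` and all `α ≥ 2`. -/
theorem time_sharing_suboptimal :
    (∀ α : ℝ, 0 ≤ α → 2 * dIC α / (dIC α + 1) ≤ 2 * d2 α) ∧
    (∀ α : ℝ, (0 < α ∧ α < 1) ∨ (1 < α ∧ α < 2) →
      2 * dIC α / (dIC α + 1) < 2 * d2 α) ∧
    (2 * dIC 0 / (dIC 0 + 1) = 2 * d2 0) ∧
    (2 * dIC 1 / (dIC 1 + 1) = 2 * d2 1) ∧
    (∀ α : ℝ, 2 ≤ α → 2 * dIC α / (dIC α + 1) = 2 * d2 α) := by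
  refine ⟨fun α _ => ?_, fun α hα => ?_, ?_, ?_, fun α hα => ?_⟩
  · have hx := dIC_pos α
    have hx1 := dIC_le_one α
    have hxm := dIC_le_half_max α
    have hm := one_le_max_two_sub α
    rw [mul_div_assoc]
    refine mul_le_mul_of_nonneg_left (le_min ?_ ?_) zero_le_two
    · rw [div_le_iff₀ (by linarith)]
      linarith
    · rw [div_le_iff₀ (by linarith)]
      -- `3x ≤ m (x + 1)` is the sum of `2x ≤ m` and `x ≤ m x`.
      nlinarith [mul_nonneg (sub_nonneg.2 hm) hx.le]
  · have hx := dIC_pos α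
    have hxm := dIC_le_half_max α
    have hm : 1 < max (2 - α) α := by
      rcases hα with ⟨_, h⟩ | ⟨h, _⟩
      · exact lt_max_of_lt_left (by linarith)
      · exact lt_max_of_lt_right h
    have hm2 : max (2 - α) α < 2 := by
      rcases hα with ⟨h, h'⟩ | ⟨h, h'⟩ <;> exact max_lt (by linarith) (by linarith)
    rw [mul_div_assoc]
    refine mul_lt_mul_of_pos_left (lt_min ?_ ?_) zero_lt_two
    · rw [div_lt_iff₀ (by linarith)]
      linarith
    · rw [div_lt_iff₀ (by linarith)]
      nlinarith [mul_pos (sub_pos.2 hm) hx]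
  · norm_num [dIC, d2]
  · norm_num [dIC, d2]
  · rw [dIC_eq_one_of_two_le hα, d2_eq_half_of_two_le hα]
    norm_num
end

section
/- Fix a real α ≥ 0, let K_a = K_b = 1 (a single, interfering, user per cell), and let both cells have the symmetric GDoF set functions a = (1−α)⁺, b = 1, e = max{(1−α)⁺, α}, g = max{1, α} (each defined on the unique admissible subset {0}). Then the supremum of all d ≥ 0 such that the pair (d, d) satisfies the seven generic inequality families equals min{1, max{α, 1−α}, max{α/2, 1−α/2}}, i.e., the symmetric GDoF 'W-curve' of the two-user Gaussian interference channel of Etkin, Tse and Wang is recovered as the K = 1 case of the MAC-IC-MAC. -/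
/-!
For a single user per cell the only admissible subset is `{0}`, so membership of `(d, d)` in the
region means `d ≤ b`, `2 d ≤ a + g`, `2 d ≤ 2 e` and `3 d ≤ a + g + e`. The last bound is the sum
of `2 d ≤ a + g` and `d ≤ e`, hence redundant (`genericRegion_one_iff`). Thus the admissible
`d ≥ 0` form the interval from `0` to `min b (min e ((a + g) / 2))`. For `α ≥ 0` one has
`e = max α (1 - α)` and `(a + g) / 2 = max (α / 2) (1 - α / 2)`; the endpoint is nonnegative, so it
is the greatest element of the interval and therefore its supremum.
-/

open Finset

/-- The generic region with one user per cell, restricted to the diagonal, for constant set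
functions; the weighted bounds `3 d ≤ a + g + e` follow from the others. -/
lemma genericRegion_one_iff (d a b e g : ℝ) :
    GenericRegion (na := 1) (nb := 1) (fun _ => d) (fun _ => d)
      (fun _ => a) (fun _ => b) (fun _ => e) (fun _ => g)
      (fun _ => a) (fun _ => b) (fun _ => e) (fun _ => g)
      ↔ d ≤ b ∧ 2 * d ≤ a + g ∧ d ≤ e := by
  have key : ∀ s : Finset (Fin 1), s.Nonempty → ∑ _j ∈ s, d = d := by
    intro s hs
    rw [hs.eq_univ]
    simp
  constructor
  · intro h
    obtain ⟨h1, -, h3, -, h5, -, -⟩ := h {0} {0} {0} {0} (by simp) (by simp) (by simp) (by simp)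
    simp only [Finset.sum_singleton] at h1 h3 h5
    refine ⟨h1, ?_, ?_⟩ <;> linarith
  · rintro ⟨h1, h2, h3⟩ Υa Ωa Υb Ωb hΥa hΩa hΥb hΩb
    rw [key Υa ⟨0, hΥa⟩, key Ωa hΩa, key Υb ⟨0, hΥb⟩, key Ωb hΩb]
    refine ⟨?_, ?_, ?_, ?_, ?_, ?_, ?_⟩ <;> linarith

/-- with `K_a = K_b = 1` (a single, interfering, user per
cell) and the constant symmetric GDoF set functions `a = (1−α)⁺`, `b = 1`,
`e = max{(1−α)⁺, α}`, `g = max{1, α}`, the supremum of all `d ≥ 0` such that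
`(d, d)` satisfies the seven generic inequality families is the symmetric
GDoF "W-curve" `min{1, max{α, 1−α}, max{α/2, 1−α/2}}` of the two-user
Gaussian interference channel of Etkin, Tse and Wang. -/
theorem symmetric_gdof_K_eq_one_W_curve (α : ℝ) (hα : 0 ≤ α) :
    sSup {d : ℝ | 0 ≤ d ∧
        GenericRegion (na := 1) (nb := 1)
          (fun _ => d) (fun _ => d)
          (fun _ => max (1 - α) 0) (fun _ => 1)
          (fun _ => max (max (1 - α) 0) α) (fun _ => max 1 α)
          (fun _ => max (1 - α) 0) (fun _ => 1)
          (fun _ => max (max (1 - α) 0) α) (fun _ => max 1 α)}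
      = min 1 (min (max α (1 - α)) (max (α / 2) (1 - α / 2))) := by
  have he : max (max (1 - α) 0) α = max α (1 - α) := by
    rw [max_assoc, max_eq_right hα, max_comm]
  have hag : max (1 - α) 0 + max 1 α = 2 * max (α / 2) (1 - α / 2) := by
    rcases le_total α 1 with h | h
    · rw [max_eq_left (by linarith), max_eq_left h, max_eq_right (by linarith)]
      ring
    · rw [max_eq_right (by linarith), max_eq_right h, max_eq_left (by linarith)]
      ring
  simp only [genericRegion_one_iff, he, hag]
  refine IsGreatest.csSup_eq ⟨⟨?_, ?_, ?_, ?_⟩, ?_⟩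
  · exact le_min zero_le_one
      (le_min (le_max_of_le_left hα) (le_max_of_le_left (by linarith)))
  · exact min_le_left _ _
  · have := (min_le_right 1 (min (max α (1 - α)) (max (α / 2) (1 - α / 2)))).trans
      (min_le_right _ _)
    linarith
  · exact (min_le_right _ _).trans (min_le_left _ _)
  · rintro d ⟨-, h1, h2, h3⟩
    exact le_min h1 (le_min h3 (by linarith))
end

section
/- Fix integers K_a, K_b ≥ 1, nonnegative direct-link exponents α_{ij} for i ∈ {a,b}, j ∈ {0,…,K_i−1}, and nonnegative cross-link exponents β_a, β_b (β_i is the exponent of the INR caused by transmitter i0 at the other receiver). Define the GDoF set functions of cell i (writing i' for the other cell): a_i(Υ) = max{max_{j∈Υ\{0}} α_{ij}, (α_{i0} − β_i)⁺} (the inner max interpreted as (α_{i0} − β_i)⁺ when Υ = {0}), b_i(Ω) = max_{j∈Ω} α_{ij}, e_i(Υ) = max{a_i(Υ), β_{i'}}, g_i(Ω) = max{b_i(Ω), β_{i'}}. Suppose a componentwise nonnegative GDoF tuple (d_a, d_b) ∈ ℝ^{K_a} × ℝ^{K_b} satisfies every one of the seven generic inequality families for (a, b, e, g) with strict inequality.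 Then there exists ρ₀ > 1 such that for every ρ ≥ ρ₀, the rate tuple with coordinates R_{ij} = d_{ij}·log₂(ρ) satisfies all seven generic inequality families for the inner Gaussian set functions (A_i, B_i, E_i, G_i) evaluated at SNR_{ij} = ρ^{α_{ij}} and INR_i = ρ^{β_i}. -/
/-!
At `ρ ≥ 1` every interference power `ρ ^ β` is at least `1`, so the private power fraction is
`μ = 1 / INR` and the effective noise level `1 + μ · INR` equals `2`. Each inner Gaussian set
function is then `log₂ (1 + X / 2)`, where `1 + X / 2` is at least half of the largest power
`ρ ^ v` occurring in it, `v` being the matching GDoF set function. Hence each inner set function is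
at least `v · log₂ ρ - 1` (`innerA_lower`, `innerB_lower`, `innerE_lower`, `innerG_lower`).

Every inequality of the region has at most three such terms on its right-hand side, so it loses at
most `3` bits, and a strict GDoF inequality has a slack growing like `log₂ ρ`, which eventually
exceeds `3` (`eventually_gap`). There are finitely many inequalities, so one threshold serves all.
-/

open Finset

/-- The seven generic inequality families, with every inequality strict. -/
def GenericRegionStrict {na nb : ℕ} [NeZero na] [NeZero nb]
    (Ra : Fin na → ℝ) (Rb : Fin nb → ℝ)
    (Aa Ba Ea Ga : Finset (Fin na) → ℝ)
    (Ab Bb Eb Gb : Finset (Fin nb) → ℝ) : Prop :=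
  ∀ (Υa Ωa : Finset (Fin na)) (Υb Ωb : Finset (Fin nb)),
    0 ∈ Υa → Ωa.Nonempty → 0 ∈ Υb → Ωb.Nonempty →
      (∑ j ∈ Ωa, Ra j) < Ba Ωa ∧
      (∑ j ∈ Ωb, Rb j) < Bb Ωb ∧
      (∑ j ∈ Υa, Ra j) + (∑ j ∈ Ωb, Rb j) < Aa Υa + Gb Ωb ∧
      (∑ j ∈ Ωa, Ra j) + (∑ j ∈ Υb, Rb j) < Ab Υb + Ga Ωa ∧
      (∑ j ∈ Υa, Ra j) + (∑ j ∈ Υb, Rb j) < Ea Υa + Eb Υb ∧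
      (∑ j ∈ Υa, Ra j) + (∑ j ∈ Ωa, Ra j) + (∑ j ∈ Υb, Rb j)
        < Aa Υa + Ga Ωa + Eb Υb ∧
      (∑ j ∈ Υa, Ra j) + (∑ j ∈ Ωb, Rb j) + (∑ j ∈ Υb, Rb j)
        < Ab Υb + Gb Ωb + Ea Υa

/-- Maximum of `f` over a finset, with base point `0` (so the empty maximum
is `0`). -/
def finMaxOn {n : ℕ} (f : Fin n → ℝ) (S : Finset (Fin n)) : ℝ :=
  S.fold max 0 f

/-- GDoF set function `a(Υ) = max{max_{j∈Υ\{0}} α_j, (α₀ − β_own)⁺}`. -/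
noncomputable def gdofA {n : ℕ} [NeZero n] (αv : Fin n → ℝ) (βown : ℝ)
    (Υ : Finset (Fin n)) : ℝ :=
  max (finMaxOn αv (Υ.erase 0)) (max (αv 0 - βown) 0)

/-- GDoF set function `b(Ω) = max_{j∈Ω} α_j`. -/
noncomputable def gdofB {n : ℕ} (αv : Fin n → ℝ) (Ω : Finset (Fin n)) : ℝ :=
  finMaxOn αv Ω

/-- GDoF set function `e(Υ) = max{a(Υ), β_other}`. -/
noncomputable def gdofE {n : ℕ} [NeZero n] (αv : Fin n → ℝ) (βown βoth : ℝ)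
    (Υ : Finset (Fin n)) : ℝ :=
  max (gdofA αv βown Υ) βoth

/-- GDoF set function `g(Ω) = max{b(Ω), β_other}`. -/
noncomputable def gdofG {n : ℕ} (αv : Fin n → ℝ) (βoth : ℝ)
    (Ω : Finset (Fin n)) : ℝ :=
  max (gdofB αv Ω) βoth

/-- For `I ≥ 1` the private interference power `min 1 (1 / I) * I` is at the noise level. -/
lemma min_one_div_mul_self {I : ℝ} (hI : 1 ≤ I) : min 1 (1 / I) * I = 1 := by
  have h0 : 0 < I := by linarith
  rw [min_eq_right ((div_le_one h0).2 hI)]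
  field_simp

lemma le_gaussC {ρ v x : ℝ} (hρ : 1 ≤ ρ) (h : ρ ^ v / 2 ≤ 1 + x) :
    v * Real.logb 2 ρ - 1 ≤ gaussC x := by
  have h0 : 0 < ρ := by linarith
  have hv : 0 < ρ ^ v := Real.rpow_pos_of_pos h0 v
  have h1 : Real.logb 2 (ρ ^ v / 2) = v * Real.logb 2 ρ - 1 := by
    rw [Real.logb_div hv.ne' two_ne_zero, Real.logb_rpow_eq_mul_logb_of_pos h0,
      Real.logb_self_eq_one one_lt_two]
  rw [← h1]
  exact Real.logb_le_logb_of_le one_lt_two (by positivity) h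

lemma rpow_max_le {ρ x y c : ℝ} (hx : ρ ^ x ≤ c) (hy : ρ ^ y ≤ c) : ρ ^ max x y ≤ c := by
  rcases max_choice x y with h | h <;> rw [h] <;> assumption

lemma sum_rpow_nonneg {n : ℕ} {ρ : ℝ} (hρ : 1 ≤ ρ) (f : Fin n → ℝ) (S : Finset (Fin n)) :
    0 ≤ ∑ j ∈ S, ρ ^ f j :=
  Finset.sum_nonneg fun _ _ => Real.rpow_nonneg (by linarith) _

/-- The summand `1` accounts for the base point `0` of `finMaxOn`. -/
lemma rpow_finMaxOn_le {n : ℕ} {ρ : ℝ} (hρ : 1 ≤ ρ) (f : Fin n → ℝ) (S : Finset (Fin n)) :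
    ρ ^ finMaxOn f S ≤ 1 + ∑ j ∈ S, ρ ^ f j := by
  classical
  induction S using Finset.induction_on with
  | empty => simp [finMaxOn]
  | insert a S ha ih =>
    have h1 := sum_rpow_nonneg hρ f S
    have h2 : 0 ≤ ρ ^ f a := Real.rpow_nonneg (by linarith) _
    unfold finMaxOn at *
    rw [Finset.fold_insert ha, Finset.sum_insert ha]
    exact rpow_max_le (by linarith) (by linarith)

/-- The private power of user `0` has exponent `α₀ - β`. -/
lemma min_mul_rpow {ρ β x : ℝ} (hρ : 1 ≤ ρ) (hβ : 0 ≤ β) :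
    min 1 (1 / ρ ^ β) * ρ ^ x = ρ ^ (x - β) := by
  have h0 : 0 < ρ := by linarith
  have hI : 1 ≤ ρ ^ β := Real.one_le_rpow hρ hβ
  rw [min_eq_right ((div_le_one (by linarith)).2 hI), Real.rpow_sub h0]
  ring

lemma rpow_gdofA_le {n : ℕ} [NeZero n] {ρ β : ℝ} (hρ : 1 ≤ ρ) (α : Fin n → ℝ)
    (S : Finset (Fin n)) :
    ρ ^ gdofA α β S ≤ 1 + (ρ ^ (α 0 - β) + ∑ j ∈ S.erase 0, ρ ^ α j) := by
  have h1 := sum_rpow_nonneg hρ α (S.erase 0)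
  have h2 := rpow_finMaxOn_le hρ α (S.erase 0)
  have h3 : 0 ≤ ρ ^ (α 0 - β) := Real.rpow_nonneg (by linarith) _
  refine rpow_max_le (by linarith) (rpow_max_le (by linarith) ?_)
  rw [Real.rpow_zero]
  linarith

lemma innerA_lower {n : ℕ} [NeZero n] {ρ β β' : ℝ} (hρ : 1 ≤ ρ) (hβ : 0 ≤ β) (hβ' : 0 ≤ β')
    (α : Fin n → ℝ) (S : Finset (Fin n)) :
    gdofA α β S * Real.logb 2 ρ - 1 ≤ innerA (fun j => ρ ^ α j) (ρ ^ β) (ρ ^ β') S := by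
  unfold innerA
  rw [min_one_div_mul_self (Real.one_le_rpow hρ hβ'), min_mul_rpow hρ hβ]
  have := rpow_gdofA_le (β := β) hρ α S
  exact le_gaussC hρ (by linarith)

lemma innerB_lower {n : ℕ} {ρ β' : ℝ} (hρ : 1 ≤ ρ) (hβ' : 0 ≤ β')
    (α : Fin n → ℝ) (S : Finset (Fin n)) :
    gdofB α S * Real.logb 2 ρ - 1 ≤ innerB (fun j => ρ ^ α j) (ρ ^ β') S := by
  unfold innerB gdofB
  rw [min_one_div_mul_self (Real.one_le_rpow hρ hβ')]
  have := rpow_finMaxOn_le hρ α S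
  exact le_gaussC hρ (by linarith)

lemma innerE_lower {n : ℕ} [NeZero n] {ρ β β' : ℝ} (hρ : 1 ≤ ρ) (hβ : 0 ≤ β) (hβ' : 0 ≤ β')
    (α : Fin n → ℝ) (S : Finset (Fin n)) :
    gdofE α β β' S * Real.logb 2 ρ - 1 ≤ innerE (fun j => ρ ^ α j) (ρ ^ β) (ρ ^ β') S := by
  unfold innerE
  have hI : 1 ≤ ρ ^ β' := Real.one_le_rpow hρ hβ'
  rw [sub_mul, min_one_div_mul_self hI, min_mul_rpow hρ hβ]
  have h1 := sum_rpow_nonneg hρ α (S.erase 0)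
  have h2 := rpow_gdofA_le (β := β) hρ α S
  have h3 : 0 ≤ ρ ^ (α 0 - β) := Real.rpow_nonneg (by linarith) _
  have h4 : ρ ^ gdofE α β β' S
      ≤ 1 + (ρ ^ (α 0 - β) + ∑ j ∈ S.erase 0, ρ ^ α j) + ρ ^ β' :=
    rpow_max_le (by linarith) (by linarith)
  exact le_gaussC hρ (by linarith)

lemma innerG_lower {n : ℕ} {ρ β' : ℝ} (hρ : 1 ≤ ρ) (hβ' : 0 ≤ β')
    (α : Fin n → ℝ) (S : Finset (Fin n)) :
    gdofG α β' S * Real.logb 2 ρ - 1 ≤ innerG (fun j => ρ ^ α j) (ρ ^ β') S := by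
  unfold innerG
  have hI : 1 ≤ ρ ^ β' := Real.one_le_rpow hρ hβ'
  rw [min_one_div_mul_self hI]
  have h1 := sum_rpow_nonneg hρ α S
  have h2 := rpow_finMaxOn_le hρ α S
  have h4 : ρ ^ gdofG α β' S ≤ 1 + ∑ j ∈ S, ρ ^ α j + ρ ^ β' :=
    rpow_max_le (by unfold gdofB; linarith) (by linarith)
  exact le_gaussC hρ (by linarith)

lemma eventually_gap {s t : ℝ} (h : s < t) :
    ∀ᶠ ρ : ℝ in Filter.atTop, s * Real.logb 2 ρ ≤ t * Real.logb 2 ρ - 3 := by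
  filter_upwards [(Real.tendsto_logb_atTop one_lt_two).eventually_ge_atTop (3 / (t - s))]
    with ρ hρ
  rw [div_le_iff₀ (sub_pos.2 h)] at hρ
  linarith

/-- achievability direction of the GDoF-region theorem for the
Gaussian MAC-IC-MAC.  Any componentwise nonnegative GDoF tuple satisfying all
seven generic inequality families for the GDoF set functions *strictly* is,
for all sufficiently large `ρ`, achieved by the explicit Etkin–Tse–Wang-type
inner bound evaluated at `SNR_{ij} = ρ^{α_{ij}}`, `INR_i = ρ^{β_i}`, with
rates `R_{ij} = d_{ij}·log₂ ρ`. -/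
theorem gdof_achievability
    (Ka Kb : ℕ)
    (αa : Fin (Ka + 1) → ℝ) (αb : Fin (Kb + 1) → ℝ)
    (hαa : ∀ j, 0 ≤ αa j) (hαb : ∀ j, 0 ≤ αb j)
    (βa βb : ℝ) (hβa : 0 ≤ βa) (hβb : 0 ≤ βb)
    (da : Fin (Ka + 1) → ℝ) (db : Fin (Kb + 1) → ℝ)
    (hda : ∀ j, 0 ≤ da j) (hdb : ∀ j, 0 ≤ db j)
    (hstrict : GenericRegionStrict da db
      (gdofA αa βa) (gdofB αa) (gdofE αa βa βb) (gdofG αa βb)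
      (gdofA αb βb) (gdofB αb) (gdofE αb βb βa) (gdofG αb βa)) :
    ∃ ρ₀ : ℝ, 1 < ρ₀ ∧ ∀ ρ : ℝ, ρ₀ ≤ ρ →
      GenericRegion
        (fun j => da j * Real.logb 2 ρ) (fun j => db j * Real.logb 2 ρ)
        (innerA (fun j => ρ ^ (αa j)) (ρ ^ βa) (ρ ^ βb))
        (innerB (fun j => ρ ^ (αa j)) (ρ ^ βb))
        (innerE (fun j => ρ ^ (αa j)) (ρ ^ βa) (ρ ^ βb))
        (innerG (fun j => ρ ^ (αa j)) (ρ ^ βb))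
        (innerA (fun j => ρ ^ (αb j)) (ρ ^ βb) (ρ ^ βa))
        (innerB (fun j => ρ ^ (αb j)) (ρ ^ βa))
        (innerE (fun j => ρ ^ (αb j)) (ρ ^ βb) (ρ ^ βa))
        (innerG (fun j => ρ ^ (αb j)) (ρ ^ βa)) := by
  have hev : ∀ᶠ ρ : ℝ in Filter.atTop, GenericRegion
        (fun j => da j * Real.logb 2 ρ) (fun j => db j * Real.logb 2 ρ)
        (innerA (fun j => ρ ^ (αa j)) (ρ ^ βa) (ρ ^ βb))
        (innerB (fun j => ρ ^ (αa j)) (ρ ^ βb))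
        (innerE (fun j => ρ ^ (αa j)) (ρ ^ βa) (ρ ^ βb))
        (innerG (fun j => ρ ^ (αa j)) (ρ ^ βb))
        (innerA (fun j => ρ ^ (αb j)) (ρ ^ βb) (ρ ^ βa))
        (innerB (fun j => ρ ^ (αb j)) (ρ ^ βa))
        (innerE (fun j => ρ ^ (αb j)) (ρ ^ βb) (ρ ^ βa))
        (innerG (fun j => ρ ^ (αb j)) (ρ ^ βa)) := by
    unfold GenericRegion
    -- Finitely many quadruples of subsets: each one may be treated separately.
    simp only [Filter.eventually_all]
    intro Υa Ωa Υb Ωb hΥa hΩa hΥb hΩb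
    obtain ⟨h1, h2, h3, h4, h5, h6, h7⟩ := hstrict Υa Ωa Υb Ωb hΥa hΩa hΥb hΩb
    filter_upwards [Filter.eventually_ge_atTop 1, eventually_gap h1, eventually_gap h2,
      eventually_gap h3, eventually_gap h4, eventually_gap h5, eventually_gap h6,
      eventually_gap h7] with ρ hρ g1 g2 g3 g4 g5 g6 g7
    have lAa := innerA_lower hρ hβa hβb αa Υa
    have lAb := innerA_lower hρ hβb hβa αb Υb
    have lBa := innerB_lower hρ hβb αa Ωa
    have lBb := innerB_lower hρ hβa αb Ωb
    have lEa := innerE_lower hρ hβa hβb αa Υa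
    have lEb := innerE_lower hρ hβb hβa αb Υb
    have lGa := innerG_lower hρ hβb αa Ωa
    have lGb := innerG_lower hρ hβa αb Ωb
    simp only [← Finset.sum_mul]
    refine ⟨?_, ?_, ?_, ?_, ?_, ?_, ?_⟩ <;> linarith
  obtain ⟨ρ₁, h⟩ := Filter.eventually_atTop.1 hev
  exact ⟨max ρ₁ 2, lt_max_of_lt_right one_lt_two, fun ρ hρ => h ρ (le_trans (le_max_left _ _) hρ)⟩
end
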